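/- Parallel composition distributes over probabilistic choice up to simulation equivalence: for probabilistic automata P, Q, R with pairwise disjoint state spaces, every p ∈ [0,1] and any frame A ⊆ E, P ∥_A Q ⊕_p P ∥_A R ≡ P ∥_A (Q ⊕_p R) (where on the left the two occurrences of P are taken as disjoint copies). -/

import Mathlib

open scoped ENNReal

namespace PCKA

/-- A probabilistic automaton over the (non-silent) action alphabet `α`, with state
space `σ`.  Transition labels are `Option α`, where `none` plays the role of the
silent action `τ`; `trans x a μ` means `x —a→ μ` where `μ` is a (countably
supported) probability distribution over states, `init` is the initial
distribution and `final` the set of final states. -/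
structure PAut (α : Type) (σ : Type) where
  trans : σ → Option α → PMF σ → Prop
  init : PMF σ
  final : Set σ

/-- The lifting `S̄ ⊆ D(X) × D(Y)` of a relation `S ⊆ X × D(Y)`: `μ S̄ ν` iff there
are weights `p n` summing to `1`, states `x n` and distributions `νs n` with
`μ = Σ_n p n · δ_{x n}`, `x n S νs n` for each `n`, and `ν = Σ_n p n · νs n`. -/
def Lift {X Y : Type} (S : X → PMF Y → Prop) (μ : PMF X) (ν : PMF Y) : Prop :=
  ∃ (p : ℕ → ℝ≥0∞) (x : ℕ → X) (νs : ℕ → PMF Y),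
    (∑' n, p n) = 1 ∧
    (∀ s, μ s = ∑' n, p n * (PMF.pure (x n)) s) ∧
    (∀ n, S (x n) (νs n)) ∧
    (∀ t, ν t = ∑' n, p n * (νs n) t)

/-- The double lifting `T̿ ⊆ D(X) × D(Z)` of a relation `T ⊆ X × Z`, via a weight
function `w`. -/
def DLift {X Z : Type} (T : X → Z → Prop) (μ : PMF X) (ψ : PMF Z) : Prop :=
  ∃ w : X → Z → ℝ≥0∞,
    (∀ x z, 0 < w x z → T x z) ∧
    (∀ x, (∑' z, w x z) = μ x) ∧
    (∀ z, (∑' x, w x z) = ψ z)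

/-- Flattening `π : D(D(Y)) → D(Y)`, `π(ψ) = Σ_{ν} ψ(ν)·ν`. -/
noncomputable def flat {Y : Type} (ψ : PMF (PMF Y)) : PMF Y := ψ.bind id

/-- Single transition step, with the τ-transitions extended by reflexivity
(`x —τ→ δ_x` is always allowed). -/
def step {α σ : Type} (P : PAut α σ) (a : Option α) (x : σ) (μ : PMF σ) : Prop :=
  P.trans x a μ ∨ (a = none ∧ μ = PMF.pure x)

/-- Weak internal moves `⇒`: the reflexive-transitive closure of the lifted
(extended) τ-transition relation on distributions. -/
def WeakTau {α σ : Type} (P : PAut α σ) : PMF σ → PMF σ → Prop :=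
  Relation.ReflTransGen (Lift (step P none))

/-- Weak `a`-transition `μ ⇒^a μ'`: `μ ⇒ μ₁ —ā→ μ₂ ⇒ μ'`. -/
def WeakStep {α σ : Type} (P : PAut α σ) (a : Option α) (μ μ' : PMF σ) : Prop :=
  ∃ μ₁ μ₂, WeakTau P μ μ₁ ∧ Lift (step P a) μ₁ μ₂ ∧ WeakTau P μ₂ μ'

/-- A probabilistic simulation from `P` to `Q` (Deng et al. style). -/
structure IsSimulation {α σ τ' : Type} (P : PAut α σ) (Q : PAut α τ')
    (S : σ → PMF τ' → Prop) : Prop where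
  init : ∃ ν₀', WeakTau Q Q.init ν₀' ∧ Lift S P.init ν₀'
  step : ∀ x a μ', P.trans x a μ' → ∀ ν, S x ν →
    ∃ ν', WeakStep Q a ν ν' ∧ Lift S μ' ν'
  final : ∀ x ν, x ∈ P.final → S x ν →
    ∃ ν', WeakTau Q ν ν' ∧ ∀ y ∈ ν'.support, y ∈ Q.final

/-- A probabilistic weak forward simulation from `P` to `Q` (Segala style). -/
structure IsWFSimulation {α σ τ' : Type} (P : PAut α σ) (Q : PAut α τ')
    (S : σ → PMF τ' → Prop) : Prop where
  init : ∃ ψ₀ : PMF (PMF τ'), DLift S P.init ψ₀ ∧ WeakTau Q Q.init (flat ψ₀)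
  step : ∀ x a μ', P.trans x a μ' → ∀ ν, S x ν →
    ∃ ψ : PMF (PMF τ'), WeakStep Q a ν (flat ψ) ∧ DLift S μ' ψ
  final : ∀ x ν, x ∈ P.final → S x ν →
    ∃ ψ : PMF (PMF τ'), (∀ ρ ∈ ψ.support, ∀ y ∈ ρ.support, y ∈ Q.final) ∧
      WeakTau Q ν (flat ψ)

/-- `P ≤ Q`: there exists a probabilistic simulation from `P` to `Q`. -/
def Sim {α σ τ' : Type} (P : PAut α σ) (Q : PAut α τ') : Prop :=
  ∃ S, IsSimulation P Q S

/-- Simulation equivalence `P ≡ Q`. -/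
def SimEquiv {α σ τ' : Type} (P : PAut α σ) (Q : PAut α τ') : Prop :=
  Sim P Q ∧ Sim Q P

/-- Convex combination `p·μ + (1−p)·ν` of two distributions. -/
noncomputable def mix {X : Type} (p : ℝ≥0∞) (hp : p ≤ 1) (μ ν : PMF X) : PMF X :=
  ⟨fun x => p * μ x + (1 - p) * ν x, by
    refine ENNReal.summable.hasSum_iff.mpr ?_
    rw [ENNReal.tsum_add, ENNReal.tsum_mul_left, ENNReal.tsum_mul_left,
      μ.tsum_coe, ν.tsum_coe, mul_one, mul_one, add_tsub_cancel_of_le hp]⟩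

/-- Product distribution `μ × ν`, with `(μ × ν)(x,y) = μ(x)·ν(y)`. -/
noncomputable def pprod {X Y : Type} (μ : PMF X) (ν : PMF Y) : PMF (X × Y) :=
  μ.bind fun x => ν.map fun y => (x, y)

/-- The skip automaton `1`: one state, no transitions, that state is final. -/
noncomputable def skip (α : Type) : PAut α Unit :=
  ⟨fun _ _ _ => False, PMF.pure (), Set.univ⟩

/-- The deadlock automaton `0`: one state, no transitions, no final state. -/
noncomputable def deadlock (α : Type) : PAut α Unit :=
  ⟨fun _ _ _ => False, PMF.pure (), ∅⟩

/-- Nondeterministic choice `P + Q`: disjoint union of the two automata (realised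
by the sum type) plus a fresh initial state `z = none` with `z —τ→ μ₀` and
`z —τ→ ν₀`. -/
noncomputable def nchoice {α σ τ' : Type} (P : PAut α σ) (Q : PAut α τ') :
    PAut α (Option (σ ⊕ τ')) where
  trans := fun s a μ =>
    match s with
    | none => a = none ∧
        (μ = P.init.map (fun x => some (Sum.inl x)) ∨
         μ = Q.init.map (fun y => some (Sum.inr y)))
    | some (Sum.inl x) => ∃ μ', P.trans x a μ' ∧ μ = μ'.map (fun x => some (Sum.inl x))
    | some (Sum.inr y) => ∃ ν', Q.trans y a ν' ∧ μ = ν'.map (fun y => some (Sum.inr y))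
  init := PMF.pure none
  final := {s | (∃ x ∈ P.final, s = some (Sum.inl x)) ∨ (∃ y ∈ Q.final, s = some (Sum.inr y))}

/-- Sequential composition `P · Q`: disjoint union (realised by the sum type),
with a τ-transition from each final state of `P` to the initial distribution of
`Q`; initial distribution that of `P`, final states those of `Q`. -/
noncomputable def pseq {α σ τ' : Type} (P : PAut α σ) (Q : PAut α τ') :
    PAut α (σ ⊕ τ') where
  trans := fun s a μ =>
    match s with
    | Sum.inl x =>
        (∃ μ', P.trans x a μ' ∧ μ = μ'.map Sum.inl) ∨
        (a = none ∧ x ∈ P.final ∧ μ = Q.init.map Sum.inr)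
    | Sum.inr y => ∃ ν', Q.trans y a ν' ∧ μ = ν'.map Sum.inr
  init := P.init.map Sum.inl
  final := {s | ∃ y ∈ Q.final, s = Sum.inr y}

/-- Kleene star `P*`: a fresh state `z = none` which is initial and the only
final state, with `z —τ→ μ₀` and `x —τ→ δ_z` for each final state `x` of `P`. -/
noncomputable def pstar {α σ : Type} (P : PAut α σ) : PAut α (Option σ) where
  trans := fun s a μ =>
    match s with
    | none => a = none ∧ μ = P.init.map some
    | some x =>
        (∃ μ', P.trans x a μ' ∧ μ = μ'.map some) ∨
        (a = none ∧ x ∈ P.final ∧ μ = PMF.pure none)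
  init := PMF.pure none
  final := {none}

/-- Probabilistic choice `P ⊕_p Q`: disjoint union with initial distribution
`p·μ₀ + (1−p)·ν₀`. -/
noncomputable def pchoice {α σ τ' : Type} (p : ℝ≥0∞) (hp : p ≤ 1)
    (P : PAut α σ) (Q : PAut α τ') : PAut α (σ ⊕ τ') where
  trans := fun s a μ =>
    match s with
    | Sum.inl x => ∃ μ', P.trans x a μ' ∧ μ = μ'.map Sum.inl
    | Sum.inr y => ∃ ν', Q.trans y a ν' ∧ μ = ν'.map Sum.inr
  init := mix p hp (P.init.map Sum.inl) (Q.init.map Sum.inr)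
  final := {s | (∃ x ∈ P.final, s = Sum.inl x) ∨ (∃ y ∈ Q.final, s = Sum.inr y)}

/-- CSP-style parallel composition `P ∥_A Q` synchronising on the frame `A`:
actions in `A` must be performed jointly, all other actions (including τ) are
interleaved. -/
noncomputable def par {α σ τ' : Type} (A : Set α) (P : PAut α σ) (Q : PAut α τ') :
    PAut α (σ × τ') where
  trans := fun s a μπ => ∃ μ ν, μπ = pprod μ ν ∧
    ((∃ b ∈ A, a = some b ∧ P.trans s.1 a μ ∧ Q.trans s.2 a ν) ∨
     ((∀ b ∈ A, a ≠ some b) ∧ P.trans s.1 a μ ∧ ν = PMF.pure s.2) ∨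
     ((∀ b ∈ A, a ≠ some b) ∧ Q.trans s.2 a ν ∧ μ = PMF.pure s.1))
  init := pprod P.init Q.init
  final := {s | s.1 ∈ P.final ∧ s.2 ∈ Q.final}

/-! The map `(X × Y) ⊕ (X × Z) → X × (Y ⊕ Z)` carries initial distribution, transitions and final
states of `P ∥_A Q ⊕_p P ∥_A R` exactly onto those of `P ∥_A (Q ⊕_p R)`. Every such map `f` yields
simulations in both directions, one relating `x` to `δ_{f x}` and the other `f x` to `δ_x`; no
internal moves are needed. -/

section Distributions

theorem exists_map_nat_eq {X : Type*} (μ : PMF X) : ∃ (p : PMF ℕ) (x : ℕ → X), p.map x = μ := by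
  have : Nonempty X := μ.support_nonempty.to_type
  obtain ⟨e, he⟩ := Set.countable_iff_exists_injOn.mp μ.support_countable
  refine ⟨μ.map e, Function.invFunOn e μ.support, ?_⟩
  have hinv : ∀ x ∈ μ.support, Function.invFunOn e μ.support (e x) = x := he.leftInvOn_invFunOn
  rw [PMF.map_comp]
  conv_rhs => rw [← μ.bind_pure]
  ext y
  refine tsum_congr fun x => ?_
  by_cases hx : μ x = 0
  · simp only [hx, zero_mul]
  · rw [Function.comp_apply, Function.comp_apply, hinv x hx]

variable {X Y Z W : Type}

theorem mix_bind (p : ℝ≥0∞) (hp : p ≤ 1) (μ ν : PMF X) (k : X → PMF Y) :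
    (mix p hp μ ν).bind k = mix p hp (μ.bind k) (ν.bind k) := by
  ext y
  change ∑' x, (p * μ x + (1 - p) * ν x) * k x y
    = p * ∑' x, μ x * k x y + (1 - p) * ∑' x, ν x * k x y
  simp only [add_mul, mul_assoc, ENNReal.tsum_add, ENNReal.tsum_mul_left]

theorem mix_map (p : ℝ≥0∞) (hp : p ≤ 1) (μ ν : PMF X) (f : X → Y) :
    (mix p hp μ ν).map f = mix p hp (μ.map f) (ν.map f) :=
  mix_bind p hp μ ν _

theorem pprod_eq_bind_right (μ : PMF X) (ν : PMF Y) :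
    pprod μ ν = ν.bind fun y => μ.map fun x => (x, y) :=
  PMF.bind_comm μ ν _

theorem pprod_mix (p : ℝ≥0∞) (hp : p ≤ 1) (μ : PMF X) (ν κ : PMF Y) :
    pprod μ (mix p hp ν κ) = mix p hp (pprod μ ν) (pprod μ κ) := by
  simp only [pprod_eq_bind_right, mix_bind]

theorem pprod_map (f : X → Z) (g : Y → W) (μ : PMF X) (ν : PMF Y) :
    (pprod μ ν).map (Prod.map f g) = pprod (μ.map f) (ν.map g) := by
  simp only [pprod, PMF.map_bind, PMF.map_comp, PMF.bind_map]
  rfl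

theorem lift_map_bind {S : X → PMF Y → Prop} {f : Z → X} {k : Z → PMF Y}
    (h : ∀ z, S (f z) (k z)) (κ : PMF Z) : Lift S (κ.map f) (κ.bind k) := by
  obtain ⟨p, z, rfl⟩ := exists_map_nat_eq κ
  rw [PMF.map_comp, PMF.bind_map]
  exact ⟨p, f ∘ z, k ∘ z, p.tsum_coe, fun _ => rfl, fun n => h (z n), fun _ => rfl⟩

theorem lift_map_map {S : X → PMF Y → Prop} {f : Z → X} {g : Z → Y}
    (h : ∀ z, S (f z) (PMF.pure (g z))) (κ : PMF Z) : Lift S (κ.map f) (κ.map g) :=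
  lift_map_bind h κ

theorem lift_pure {S : X → PMF Y → Prop} {x : X} {ν : PMF Y} (h : S x ν) :
    Lift S (PMF.pure x) ν := by
  simpa only [PMF.pure_map, PMF.pure_bind] using
    lift_map_bind (fun _ : Unit => h) (PMF.pure ())

end Distributions

section FunctionalBisimulation

variable {α σ σ' τ τ' ρ : Type}

/-- A functional bisimulation: the transitions of `f x` are exactly the images under `f` of the
transitions of `x`, and `f` preserves and reflects finality. Initial distributions are left
unconstrained, so that the injections into a probabilistic choice are examples. -/
structure IsFunctionalBisim (P : PAut α σ) (Q : PAut α τ) (f : σ → τ) : Prop where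
  trans_iff : ∀ x a ν, Q.trans (f x) a ν ↔ ∃ μ, P.trans x a μ ∧ ν = μ.map f
  mem_final_iff : ∀ x, f x ∈ Q.final ↔ x ∈ P.final

theorem sim_of_span {M : PAut α ρ} {P : PAut α σ} {Q : PAut α τ} {f : ρ → σ} {g : ρ → τ}
    (hf : IsFunctionalBisim M P f) (hg : IsFunctionalBisim M Q g)
    (hf₀ : M.init.map f = P.init) (hg₀ : M.init.map g = Q.init) : Sim P Q := by
  let S : σ → PMF τ → Prop := fun x ν => ∃ z, f z = x ∧ PMF.pure (g z) = ν
  have lift_S : ∀ κ : PMF ρ, Lift S (κ.map f) (κ.map g) :=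
    lift_map_map fun z => ⟨z, rfl, rfl⟩
  refine ⟨S, ⟨Q.init, .refl, hf₀ ▸ hg₀ ▸ lift_S M.init⟩, ?_, ?_⟩
  · rintro _ a _ hx _ ⟨z, rfl, rfl⟩
    obtain ⟨κ, hz, rfl⟩ := (hf.trans_iff z a _).mp hx
    have hgz : Q.trans (g z) a (κ.map g) := (hg.trans_iff z a _).mpr ⟨κ, hz, rfl⟩
    exact ⟨κ.map g, ⟨_, _, .refl, lift_pure (.inl hgz), .refl⟩, lift_S κ⟩
  · rintro _ _ hx ⟨z, rfl, rfl⟩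
    have hgz : g z ∈ Q.final := (hg.mem_final_iff z).mpr ((hf.mem_final_iff z).mp hx)
    refine ⟨_, .refl, fun y hy => ?_⟩
    rwa [(PMF.mem_support_pure_iff _ _).mp hy]

namespace IsFunctionalBisim

protected theorem id (P : PAut α σ) : IsFunctionalBisim P P id where
  trans_iff x a ν := by simp only [id_eq, PMF.map_id, exists_eq_right']
  mem_final_iff _ := Iff.rfl

theorem simEquiv {P : PAut α σ} {Q : PAut α τ} {f : σ → τ} (hf : IsFunctionalBisim P Q f)
    (hf₀ : P.init.map f = Q.init) : SimEquiv P Q :=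
  ⟨sim_of_span (.id P) hf (PMF.map_id _) hf₀, sim_of_span hf (.id P) hf₀ (PMF.map_id _)⟩

theorem pchoice_inl (p : ℝ≥0∞) (hp : p ≤ 1) (P : PAut α σ) (Q : PAut α τ) :
    IsFunctionalBisim P (pchoice p hp P Q) Sum.inl where
  trans_iff _ _ _ := Iff.rfl
  mem_final_iff x := by simp [pchoice]

theorem pchoice_inr (p : ℝ≥0∞) (hp : p ≤ 1) (P : PAut α σ) (Q : PAut α τ) :
    IsFunctionalBisim Q (pchoice p hp P Q) Sum.inr where
  trans_iff _ _ _ := Iff.rfl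
  mem_final_iff y := by simp [pchoice]

theorem sumElim {P : PAut α σ} {Q : PAut α τ} {T : PAut α ρ} {f : σ → ρ} {g : τ → ρ}
    (hf : IsFunctionalBisim P T f) (hg : IsFunctionalBisim Q T g) (p : ℝ≥0∞) (hp : p ≤ 1) :
    IsFunctionalBisim (pchoice p hp P Q) T (Sum.elim f g) where
  trans_iff := by
    rintro (x | y) a ν
    · simp [pchoice, hf.trans_iff, PMF.map_comp]
    · simp [pchoice, hg.trans_iff, PMF.map_comp]
  mem_final_iff := by
    rintro (x | y)
    · simp [pchoice, hf.mem_final_iff]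
    · simp [pchoice, hg.mem_final_iff]

protected theorem par {P : PAut α σ} {P' : PAut α σ'} {Q : PAut α τ} {Q' : PAut α τ'}
    {f : σ → σ'} {g : τ → τ'} (hf : IsFunctionalBisim P P' f) (hg : IsFunctionalBisim Q Q' g)
    (A : Set α) : IsFunctionalBisim (par A P Q) (par A P' Q') (Prod.map f g) where
  trans_iff := by
    rintro ⟨x, y⟩ a π
    constructor
    · rintro ⟨μ', ν', rfl, ⟨b, hb, rfl, hx, hy⟩ | ⟨ha, hx, rfl⟩ | ⟨ha, hy, rfl⟩⟩
      · obtain ⟨μ, hμ, rfl⟩ := (hf.trans_iff _ _ _).mp hx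
        obtain ⟨ν, hν, rfl⟩ := (hg.trans_iff _ _ _).mp hy
        exact ⟨_, ⟨μ, ν, rfl, .inl ⟨b, hb, rfl, hμ, hν⟩⟩, (pprod_map ..).symm⟩
      · obtain ⟨μ, hμ, rfl⟩ := (hf.trans_iff _ _ _).mp hx
        refine ⟨_, ⟨μ, .pure y, rfl, .inr (.inl ⟨ha, hμ, rfl⟩)⟩, ?_⟩
        rw [pprod_map, PMF.pure_map, Prod.map_snd]
      · obtain ⟨ν, hν, rfl⟩ := (hg.trans_iff _ _ _).mp hy
        refine ⟨_, ⟨.pure x, ν, rfl, .inr (.inr ⟨ha, hν, rfl⟩)⟩, ?_⟩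
        rw [pprod_map, PMF.pure_map, Prod.map_fst]
    · rintro ⟨_, ⟨μ, ν, rfl, h⟩, rfl⟩
      refine ⟨μ.map f, ν.map g, pprod_map f g μ ν, ?_⟩
      rcases h with ⟨b, hb, rfl, hμ, hν⟩ | ⟨ha, hμ, rfl⟩ | ⟨ha, hν, rfl⟩
      · exact .inl ⟨b, hb, rfl, (hf.trans_iff _ _ _).mpr ⟨μ, hμ, rfl⟩,
          (hg.trans_iff _ _ _).mpr ⟨ν, hν, rfl⟩⟩
      · exact .inr (.inl ⟨ha, (hf.trans_iff _ _ _).mpr ⟨μ, hμ, rfl⟩, PMF.pure_map g y⟩)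
      · exact .inr (.inr ⟨ha, (hg.trans_iff _ _ _).mpr ⟨ν, hν, rfl⟩, PMF.pure_map f x⟩)
  mem_final_iff z := and_congr (hf.mem_final_iff z.1) (hg.mem_final_iff z.2)

end IsFunctionalBisim

theorem pchoice_init_map_sumElim (p : ℝ≥0∞) (hp : p ≤ 1) (P : PAut α σ) (Q : PAut α τ)
    (f : σ → ρ) (g : τ → ρ) :
    (pchoice p hp P Q).init.map (Sum.elim f g) = mix p hp (P.init.map f) (Q.init.map g) := by
  simp only [pchoice, mix_map, PMF.map_comp, Sum.elim_comp_inl, Sum.elim_comp_inr]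

end FunctionalBisimulation

/-- parallel composition distributes over probabilistic choice up
to simulation equivalence: `P ∥_A Q ⊕_p P ∥_A R ≡ P ∥_A (Q ⊕_p R)` (the two
occurrences of `P` on the left are disjoint copies). -/
theorem par_distrib_pchoice {α σ₁ σ₂ σ₃ : Type}
    (P : PAut α σ₁) (Q : PAut α σ₂) (R : PAut α σ₃)
    (p : ℝ≥0∞) (hp : p ≤ 1) (E A : Set α) (hA : A ⊆ E) :
    SimEquiv (pchoice p hp (par A P Q) (par A P R))
      (par A P (pchoice p hp Q R)) := by
  have left : IsFunctionalBisim (par A P Q) (par A P (pchoice p hp Q R)) (Prod.map id Sum.inl) :=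
    (IsFunctionalBisim.id P).par (.pchoice_inl p hp Q R) A
  have right : IsFunctionalBisim (par A P R) (par A P (pchoice p hp Q R)) (Prod.map id Sum.inr) :=
    (IsFunctionalBisim.id P).par (.pchoice_inr p hp Q R) A
  refine (left.sumElim right p hp).simEquiv ?_
  calc (pchoice p hp (par A P Q) (par A P R)).init.map _
      = mix p hp ((pprod P.init Q.init).map (Prod.map id Sum.inl))
          ((pprod P.init R.init).map (Prod.map id Sum.inr)) := pchoice_init_map_sumElim ..
    _ = mix p hp (pprod P.init (Q.init.map Sum.inl)) (pprod P.init (R.init.map Sum.inr)) := by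
        simp only [pprod_map, PMF.map_id]
    _ = (par A P (pchoice p hp Q R)).init := (pprod_mix ..).symm

end PCKA
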